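/- Let f : ℝ^{d_0} × ⋯ × ℝ^{d_q} → ℝ be a function of the block variables (w_0, …, w_q), and suppose that for each block m ∈ {0, …, q} and each fixed value of the other blocks, the map w_m ↦ f(w_0, …, w_m, …, w_q) is L_m-smooth. Let μ_m > 0 and let f_{μ_m} denote the Gaussian smoothing of f in block m only, i.e., f_{μ_m}(w) = E_{u_m}[f(w_0, …, w_m + μ_m u_m, …, w_q)] with u_m ~ N(0, I_{d_m}). Then for every w and every block m, ‖∇_m f_{μ_m}(w) − ∇_m f(w)‖² ≤ μ_m² L_m² (d_m + 3)³ / 4, where ∇_m denotes the partial gradient with respect to w_m. -/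

import Mathlib

open MeasureTheory ProbabilityTheory

/-- The standard multivariate Gaussian distribution `N(0, I_d)` on `ℝ^d`. -/
noncomputable def stdGaussian (d : ℕ) : Measure (EuclideanSpace ℝ (Fin d)) :=
  (Measure.pi fun _ : Fin d => gaussianReal 0 1).map
    (MeasurableEquiv.toLp 2 (Fin d → ℝ))

section Smoothing

variable {E : Type*} [NormedAddCommGroup E] [NormedSpace ℝ E]

/-- A function with `K`-Lipschitz derivative grows at most quadratically. -/
lemma norm_sub_le_of_lipschitzWith_fderiv {g : E → ℝ} {K : NNReal} (hg : Differentiable ℝ g)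
    (hK : LipschitzWith K (fderiv ℝ g)) (z v : E) :
    ‖g (z + v) - g z‖ ≤ (‖fderiv ℝ g z‖ + K * ‖v‖) * ‖v‖ := by
  have hbound : ∀ x ∈ Metric.closedBall z ‖v‖, ‖fderiv ℝ g x‖ ≤ ‖fderiv ℝ g z‖ + K * ‖v‖ := by
    intro x hx
    have hx' : ‖x - z‖ ≤ ‖v‖ := by simpa [dist_eq_norm] using hx
    calc ‖fderiv ℝ g x‖ ≤ ‖fderiv ℝ g z‖ + ‖fderiv ℝ g x - fderiv ℝ g z‖ :=
          norm_le_norm_add_norm_sub' _ _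
      _ ≤ ‖fderiv ℝ g z‖ + K * ‖x - z‖ := by gcongr; exact hK.norm_sub_le x z
      _ ≤ _ := by gcongr
  have h := (convex_closedBall z ‖v‖).norm_image_sub_le_of_norm_fderiv_le (𝕜 := ℝ)
    (fun x _ => hg x) hbound (Metric.mem_closedBall_self (norm_nonneg v))
    (show z + v ∈ Metric.closedBall z ‖v‖ by simp)
  simpa using h

variable [MeasurableSpace E] [BorelSpace E] [FiniteDimensional ℝ E]

/-- Smoothing with respect to a probability measure with finite second moment commutes with
differentiation, for functions with Lipschitz derivative. -/
lemma hasFDerivAt_integral_comp_add_smul {ν : Measure E} [IsProbabilityMeasure ν]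
    (hν : Integrable (fun u => ‖u‖) ν) (hν2 : Integrable (fun u => ‖u‖ ^ 2) ν)
    {g : E → ℝ} {K : NNReal} (hg : Differentiable ℝ g) (hK : LipschitzWith K (fderiv ℝ g))
    (r : ℝ) (z : E) :
    HasFDerivAt (fun x => ∫ u, g (x + r • u) ∂ν) (∫ u, fderiv ℝ g (z + r • u) ∂ν) z := by
  have hgc : Continuous g := hg.continuous
  have hdc : Continuous (fderiv ℝ g) := hK.continuous
  refine hasFDerivAt_integral_of_dominated_of_fderiv_le
    (F' := fun x u => fderiv ℝ g (x + r • u))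
    (bound := fun u => ‖fderiv ℝ g z‖ + K * (1 + |r| * ‖u‖))
    (Metric.ball_mem_nhds z one_pos) ?_ ?_ ?_ ?_ ?_ ?_
  · exact .of_forall fun x => (by fun_prop : Continuous fun u => g (x + r • u)).aestronglyMeasurable
  · refine Integrable.mono' (g := fun u => ‖g z‖ + (‖fderiv ℝ g z‖ * |r|) * ‖u‖
      + (K * r ^ 2) * ‖u‖ ^ 2) ?_
      (by fun_prop : Continuous fun u => g (z + r • u)).aestronglyMeasurable
      (.of_forall fun u => ?_)
    · exact ((integrable_const _).add (hν.const_mul _)).add (hν2.const_mul _)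
    · have h := norm_sub_le_of_lipschitzWith_fderiv hg hK z (r • u)
      have h' := norm_le_norm_add_norm_sub' (g (z + r • u)) (g z)
      rw [norm_smul, Real.norm_eq_abs r] at h
      rw [← sq_abs r]
      linarith
  · exact (by fun_prop : Continuous fun u => fderiv ℝ g (z + r • u)).aestronglyMeasurable
  · refine .of_forall fun u x hx => ?_
    have hx' : ‖x - z‖ ≤ 1 := by simpa [dist_eq_norm] using (Metric.mem_ball.1 hx).le
    calc ‖fderiv ℝ g (x + r • u)‖
        ≤ ‖fderiv ℝ g z‖ + ‖fderiv ℝ g (x + r • u) - fderiv ℝ g z‖ :=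
          norm_le_norm_add_norm_sub' _ _
      _ ≤ ‖fderiv ℝ g z‖ + K * ‖(x + r • u) - z‖ := by gcongr; exact hK.norm_sub_le _ _
      _ ≤ ‖fderiv ℝ g z‖ + K * (1 + |r| * ‖u‖) := by
          gcongr
          calc ‖(x + r • u) - z‖ = ‖(x - z) + r • u‖ := by congr 1; abel
            _ ≤ ‖x - z‖ + ‖r • u‖ := norm_add_le _ _
            _ ≤ _ := by rw [norm_smul, Real.norm_eq_abs]; gcongr
  · exact (integrable_const _).add (((integrable_const _).add (hν.const_mul _)).const_mul _)
  · refine .of_forall fun u x _ => ?_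
    exact (hasFDerivAt_comp_add_right (r • u)).2 (hg (x + r • u)).hasFDerivAt

/-- The derivative of the smoothed function differs from the original one by at most `K` times the
mean displacement. -/
lemma norm_fderiv_integral_comp_add_smul_sub_le {ν : Measure E} [IsProbabilityMeasure ν]
    (hν : Integrable (fun u => ‖u‖) ν) (hν2 : Integrable (fun u => ‖u‖ ^ 2) ν)
    {g : E → ℝ} {K : NNReal} (hg : Differentiable ℝ g) (hK : LipschitzWith K (fderiv ℝ g))
    (r : ℝ) (z : E) :
    ‖fderiv ℝ (fun x => ∫ u, g (x + r • u) ∂ν) z - fderiv ℝ g z‖ ≤ K * |r| * ∫ u, ‖u‖ ∂ν := by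
  rw [(hasFDerivAt_integral_comp_add_smul hν hν2 hg hK r z).fderiv]
  have hle : ∀ u, ‖fderiv ℝ g (z + r • u) - fderiv ℝ g z‖ ≤ K * |r| * ‖u‖ := fun u => by
    simpa [norm_smul, mul_assoc] using hK.norm_sub_le (z + r • u) z
  have hdc : Continuous (fderiv ℝ g) := hK.continuous
  have hsub : Integrable (fun u => fderiv ℝ g (z + r • u) - fderiv ℝ g z) ν :=
    (hν.const_mul _).mono'
      (by fun_prop : Continuous fun u => fderiv ℝ g (z + r • u) - fderiv ℝ g z).aestronglyMeasurable
      (.of_forall hle)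
  have hint : Integrable (fun u => fderiv ℝ g (z + r • u)) ν := by
    refine (hsub.add (integrable_const (fderiv ℝ g z))).congr (.of_forall fun u => ?_)
    simp
  have heq : ∫ u, fderiv ℝ g (z + r • u) ∂ν - fderiv ℝ g z
      = ∫ u, (fderiv ℝ g (z + r • u) - fderiv ℝ g z) ∂ν := by
    rw [integral_sub hint (integrable_const _)]
    simp
  rw [heq, ← integral_const_mul]
  exact norm_integral_le_of_norm_le (hν.const_mul _) (.of_forall hle)

end Smoothing

section StdGaussian

instance isProbabilityMeasure_stdGaussian_fin (d : ℕ) :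
    IsProbabilityMeasure (_root_.stdGaussian d) :=
  Measure.isProbabilityMeasure_map (MeasurableEquiv.measurable _).aemeasurable

lemma integrable_sq_gaussianReal : Integrable (fun x : ℝ => x ^ 2) (gaussianReal 0 1) :=
  (memLp_id_gaussianReal 2).integrable_sq

lemma integral_sq_gaussianReal : ∫ x : ℝ, x ^ 2 ∂(gaussianReal 0 1) = 1 := by
  have h := variance_id_gaussianReal (μ := 0) (v := 1)
  rw [variance_eq_integral aemeasurable_id] at h
  simpa using h

lemma integrable_eval_sq_pi_gaussianReal {d : ℕ} (i : Fin d) :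
    Integrable (fun x : Fin d → ℝ => x i ^ 2) (Measure.pi fun _ => gaussianReal 0 1) :=
  integrable_comp_eval (μ := fun _ : Fin d => gaussianReal 0 1) (i := i)
    (f := fun x : ℝ => x ^ 2) integrable_sq_gaussianReal

lemma integrable_norm_sq_stdGaussian (d : ℕ) :
    Integrable (fun u => ‖u‖ ^ 2) (_root_.stdGaussian d) := by
  rw [_root_.stdGaussian, integrable_map_equiv]
  simp only [Function.comp_def, EuclideanSpace.norm_sq_eq, MeasurableEquiv.toLp_apply,
    Real.norm_eq_abs, sq_abs]
  exact integrable_finsetSum _ fun i _ => integrable_eval_sq_pi_gaussianReal i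

lemma integral_norm_sq_stdGaussian (d : ℕ) : ∫ u, ‖u‖ ^ 2 ∂(_root_.stdGaussian d) = d := by
  rw [_root_.stdGaussian, integral_map_equiv]
  simp only [EuclideanSpace.norm_sq_eq, MeasurableEquiv.toLp_apply, Real.norm_eq_abs, sq_abs]
  rw [integral_finsetSum _ fun i _ => integrable_eval_sq_pi_gaussianReal i]
  have hone : ∀ i : Fin d, ∫ x : Fin d → ℝ, x i ^ 2 ∂(Measure.pi fun _ => gaussianReal 0 1) = 1 :=
    fun i => by
      rw [integral_comp_eval (μ := fun _ : Fin d => gaussianReal 0 1) (i := i)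
        (f := fun x : ℝ => x ^ 2) integrable_sq_gaussianReal.aestronglyMeasurable,
        integral_sq_gaussianReal]
  simp [hone]

lemma integrable_norm_stdGaussian (d : ℕ) : Integrable (fun u => ‖u‖) (_root_.stdGaussian d) := by
  refine ((integrable_const (1 : ℝ)).add (integrable_norm_sq_stdGaussian d)).mono'
    continuous_norm.aestronglyMeasurable (.of_forall fun u => ?_)
  simp only [norm_norm, Pi.add_apply]
  nlinarith [sq_nonneg (‖u‖ - 1), norm_nonneg u]

lemma integral_norm_stdGaussian_le (d : ℕ) :
    ∫ u, ‖u‖ ∂(_root_.stdGaussian d) ≤ ((d : ℝ) + 1) / 2 := by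
  have hsq := integrable_norm_sq_stdGaussian d
  calc ∫ u, ‖u‖ ∂(_root_.stdGaussian d)
      ≤ ∫ u, (‖u‖ ^ 2 + 1) / 2 ∂(_root_.stdGaussian d) :=
        integral_mono (integrable_norm_stdGaussian d) ((hsq.add (integrable_const 1)).div_const 2)
          fun u => by simp only; nlinarith [sq_nonneg (‖u‖ - 1)]
    _ = ((d : ℝ) + 1) / 2 := by
        rw [integral_div, integral_add hsq (integrable_const 1), integral_norm_sq_stdGaussian]
        simp

end StdGaussian

lemma norm_gradient_sub_gradient {E : Type*} [NormedAddCommGroup E] [InnerProductSpace ℝ E]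
    [CompleteSpace E] (g h : E → ℝ) (x y : E) :
    ‖gradient g x - gradient h y‖ = ‖fderiv ℝ g x - fderiv ℝ h y‖ := by
  rw [gradient, gradient, ← map_sub, LinearIsometryEquiv.norm_map]

/-- Block-wise Gaussian smoothing bound: if for each block `m` the partial map
`w_m ↦ f(w_0, …, w_m, …, w_q)` is `L_m`-smooth, then the block-`m` partial gradient of the
block-`m` Gaussian smoothing satisfies
`‖∇_m f_{μ_m}(w) − ∇_m f(w)‖² ≤ μ_m² L_m² (d_m + 3)³ / 4`. -/
theorem block_gaussian_smoothing_gradient_bound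
    (q : ℕ) (dd : Fin (q + 1) → ℕ) (Lm μm : Fin (q + 1) → ℝ)
    (hμ : ∀ m, 0 < μm m)
    (f : (∀ m, EuclideanSpace ℝ (Fin (dd m))) → ℝ)
    (hdiff : ∀ (m : Fin (q + 1)) (w : ∀ m, EuclideanSpace ℝ (Fin (dd m))),
      Differentiable ℝ (fun z => f (Function.update w m z)))
    (hlip : ∀ (m : Fin (q + 1)) (w : ∀ m, EuclideanSpace ℝ (Fin (dd m)))
        (z z' : EuclideanSpace ℝ (Fin (dd m))),
      ‖gradient (fun z => f (Function.update w m z)) z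
        - gradient (fun z => f (Function.update w m z)) z'‖ ≤ Lm m * ‖z - z'‖)
    (w : ∀ m, EuclideanSpace ℝ (Fin (dd m))) (m : Fin (q + 1)) :
    ‖gradient (fun z => ∫ u, f (Function.update w m (z + μm m • u)) ∂(stdGaussian (dd m))) (w m)
      - gradient (fun z => f (Function.update w m z)) (w m)‖ ^ 2
      ≤ (μm m) ^ 2 * (Lm m) ^ 2 * ((dd m : ℝ) + 3) ^ 3 / 4 := by
  set g : EuclideanSpace ℝ (Fin (dd m)) → ℝ := fun z => f (Function.update w m z)
  have hK : LipschitzWith (Real.nnabs (Lm m)) (fderiv ℝ g) :=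
    LipschitzWith.of_dist_le_mul fun z z' => by
      rw [dist_eq_norm, dist_eq_norm, ← norm_gradient_sub_gradient]
      refine (hlip m w z z').trans ?_
      rw [Real.coe_nnabs]
      gcongr
      exact le_abs_self _
  have hle := norm_fderiv_integral_comp_add_smul_sub_le (integrable_norm_stdGaussian (dd m))
    (integrable_norm_sq_stdGaussian (dd m)) (hdiff m w) hK (μm m) (w m)
  rw [norm_gradient_sub_gradient]
  rw [Real.coe_nnabs] at hle
  have hd : (0 : ℝ) ≤ dd m := Nat.cast_nonneg _
  calc _ ≤ (|Lm m| * |μm m| * (((dd m : ℝ) + 1) / 2)) ^ 2 := by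
        refine pow_le_pow_left₀ (norm_nonneg _) (hle.trans ?_) 2
        gcongr
        exact integral_norm_stdGaussian_le _
    _ = (μm m) ^ 2 * (Lm m) ^ 2 * ((dd m : ℝ) + 1) ^ 2 / 4 := by
        rw [mul_pow, mul_pow, sq_abs, sq_abs]
        ring
    _ ≤ _ := by
        gcongr
        nlinarith [pow_nonneg hd 3, pow_nonneg hd 2]
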